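/- arXiv:2406.01973 — 6 statements merged into one kernel-verified Lean document; each statement's English description precedes it below -/
import Mathlib

section
/- Let t ≥ 1 be a natural number, let α be real with 1/(2(t+1)) < α < 1/2, and let Y ∈ [0,1] satisfy Y > ((t+1)α − 1/2)/t (equivalently β(t, α, Y) > 0). Then |α − tY/(t+1)| − |α − Y| > 0 if and only if Y < (t+1)α/(t + 1/2). -/
/-- `β(t, α, Y) := |α − tY/(t+1) − 1/(t+1)| − |α − tY/(t+1)|`. -/
noncomputable def beta (t : ℕ) (α Y : ℝ) : ℝ :=
  |α - (t : ℝ) * Y / ((t : ℝ) + 1) - 1 / ((t : ℝ) + 1)| - |α - (t : ℝ) * Y / ((t : ℝ) + 1)|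

/-!
For `Y > 0` the updated average `sY/(s+1)` lies strictly below `Y`, so `α` is closer to `Y` than to
`sY/(s+1)` exactly when `α` exceeds their midpoint `(s + 1/2)Y/(s+1)`.
-/

theorem abs_sub_lt_abs_sub_iff_add_lt_two_mul {R : Type*} [CommRing R] [LinearOrder R]
    [IsStrictOrderedRing R] {a b x : R} (hab : a < b) :
    |x - b| < |x - a| ↔ a + b < 2 * x := by
  have sq_sub_sq_factor : (x - a) ^ 2 - (x - b) ^ 2 = (b - a) * (2 * x - (a + b)) := by ring
  rw [← sq_lt_sq, ← sub_pos, sq_sub_sq_factor, mul_pos_iff_of_pos_left (sub_pos.2 hab), sub_pos]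

section UpdatedAverage

variable {K : Type*} [Field K] [LinearOrder K] [IsStrictOrderedRing K] {s α Y : K}

theorem mul_div_add_one_lt_self (hs : 0 < s + 1) (hY : 0 < Y) : s * Y / (s + 1) < Y := by
  rw [div_lt_iff₀ hs]
  linarith

theorem mul_div_add_one_add_self_lt_iff (hs : -(1 / 2) < s) :
    s * Y / (s + 1) + Y < 2 * α ↔ Y < (s + 1) * α / (s + 1 / 2) := by
  have hs_one : 0 < s + 1 := by linarith
  have hs_half : 0 < s + 1 / 2 := by linarith
  have twice_midpoint : s * Y / (s + 1) + Y = 2 * (Y * (s + 1 / 2) / (s + 1)) := by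
    field_simp
    ring
  rw [twice_midpoint, mul_lt_mul_iff_right₀ two_pos, div_lt_iff₀' hs_one, lt_div_iff₀ hs_half]

theorem pos_of_add_one_mul_sub_half_div_lt (hs : 0 < s) (hα : 1 / (2 * (s + 1)) < α)
    (hY : ((s + 1) * α - 1 / 2) / s < Y) : 0 < Y := by
  have half_lt : 1 / 2 < (s + 1) * α := by
    rw [div_lt_iff₀ (by positivity)] at hα
    linarith
  exact (div_pos (sub_pos.2 half_lt) hs).trans hY

theorem stmt_2_general (hs : -(1 / 2) < s) (hY : 0 < Y) :
    |α - s * Y / (s + 1)| - |α - Y| > 0 ↔ Y < (s + 1) * α / (s + 1 / 2) := by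
  have average_lt : s * Y / (s + 1) < Y := mul_div_add_one_lt_self (by linarith) hY
  rw [gt_iff_lt, sub_pos, abs_sub_lt_abs_sub_iff_add_lt_two_mul average_lt,
    mul_div_add_one_add_self_lt_iff hs]

end UpdatedAverage

theorem stmt_2 (t : ℕ) (ht : 1 ≤ t) (α : ℝ)
    (hα0 : 1 / (2 * ((t : ℝ) + 1)) < α) (hα1 : α < 1 / 2)
    (Y : ℝ) (hY0 : 0 ≤ Y) (hY1 : Y ≤ 1)
    (hYb : Y > (((t : ℝ) + 1) * α - 1 / 2) / (t : ℝ)) :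
    |α - (t : ℝ) * Y / ((t : ℝ) + 1)| - |α - Y| > 0 ↔
      Y < ((t : ℝ) + 1) * α / ((t : ℝ) + 1 / 2) := by
  have t_pos : (0 : ℝ) < t := by exact_mod_cast ht
  exact stmt_2_general (by linarith) (pos_of_add_one_mul_sub_half_div_lt t_pos hα0 hYb)
end

section
/- Let t ≥ 1 be a natural number, let α be real with 1/(2(t+1)) < α < 1/2, and let Y = ((t+1)α − 1/2)/t (equivalently β(t, α, Y) = 0). Then for every p ∈ [0,1], p·(|α − (tY+1)/(t+1)| − |α − tY/(t+1)|) + |α − tY/(t+1)| − |α − Y| > 0; in particular the first term vanishes and the expression equals 1/(2(t+1)) − (1/2 − α)/t, which is positive precisely because α > 1/(2(t+1)). -/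
/-!
The choice of `Y` means that `α` is the running mean obtained from `Y` by a virtual observation
`1 / 2`. It is thus the midpoint of the two possible new means, at distance `1 / (2 * (t + 1))` from
both, so the violation probability has no influence, and the distance grows as soon as `Y` itself
is closer to `α` than that.
-/

section Field

variable {K : Type*} [Field K]

/-- The mean of `t + 1` observations, of which the first `t` have mean `Y` and the last is `v`; this
is the update `Y(t+1) = (t Y(t) + V(t+1)) / (t + 1)`, with `t` and `v` arbitrary field elements. -/
def runningMean (t Y v : K) : K :=
  (t * Y + v) / (t + 1)

theorem runningMean_zero (t Y : K) : runningMean t Y 0 = t * Y / (t + 1) := by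
  rw [runningMean, add_zero]

theorem runningMean_sub_runningMean (t Y v w : K) :
    runningMean t Y v - runningMean t Y w = (v - w) / (t + 1) := by
  rw [runningMean, runningMean, ← sub_div, add_sub_add_left_eq_sub]

theorem eq_runningMean_iff {t Y v m : K} (ht : t ≠ 0) (ht' : t + 1 ≠ 0) :
    m = runningMean t Y v ↔ Y = ((t + 1) * m - v) / t := by
  rw [runningMean, eq_div_iff ht', eq_div_iff ht, eq_sub_iff_add_eq, mul_comm m, mul_comm Y,
    eq_comm]

theorem runningMean_sub_self {t : K} (ht : t ≠ 0) (ht' : t + 1 ≠ 0) (Y v : K) :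
    runningMean t Y v - Y = (v - runningMean t Y v) / t := by
  rw [runningMean]
  field_simp
  ring

end Field

section LinearOrderedField

variable {K : Type*} [Field K] [LinearOrder K] [IsStrictOrderedRing K] {t α Y : K}

theorem abs_runningMean_half_sub_zero (ht : 0 < t + 1) (Y : K) :
    |runningMean t Y (1 / 2) - runningMean t Y 0| = 1 / (2 * (t + 1)) := by
  rw [runningMean_sub_runningMean, sub_zero, div_div, abs_of_pos (by positivity)]

theorem abs_runningMean_half_sub_one (ht : 0 < t + 1) (Y : K) :
    |runningMean t Y (1 / 2) - runningMean t Y 1| = 1 / (2 * (t + 1)) := by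
  have half_sub_one : (1 / 2 - 1 : K) = -(1 / 2) := by norm_num
  rw [runningMean_sub_runningMean, half_sub_one, neg_div, abs_neg, div_div,
    abs_of_pos (by positivity)]

theorem half_step_sub_pos_iff (ht : 0 < t) :
    0 < 1 / (2 * (t + 1)) - (1 / 2 - α) / t ↔ 1 / (2 * (t + 1)) < α := by
  have factored : 1 / (2 * (t + 1)) - (1 / 2 - α) / t = (α - 1 / (2 * (t + 1))) / t := by
    field_simp
    ring
  rw [factored, div_pos_iff_of_pos_right ht, sub_pos]

theorem stmt_3_general (ht : 0 < t) (hα : α ≤ 1 / 2) (hY : Y = ((t + 1) * α - 1 / 2) / t) (p : K) :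
    |α - (t * Y + 1) / (t + 1)| - |α - t * Y / (t + 1)| = 0 ∧
      p * (|α - (t * Y + 1) / (t + 1)| - |α - t * Y / (t + 1)|) + |α - t * Y / (t + 1)| - |α - Y|
        = 1 / (2 * (t + 1)) - (1 / 2 - α) / t ∧
      (0 < 1 / (2 * (t + 1)) - (1 / 2 - α) / t ↔ 1 / (2 * (t + 1)) < α) := by
  have ht' : 0 < t + 1 := by positivity
  have hmean : α = runningMean t Y (1 / 2) := (eq_runningMean_iff ht.ne' ht'.ne').2 hY
  have dist_no_violation : |α - t * Y / (t + 1)| = 1 / (2 * (t + 1)) := by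
    rw [← runningMean_zero, hmean, abs_runningMean_half_sub_zero ht']
  have dist_violation : |α - (t * Y + 1) / (t + 1)| = 1 / (2 * (t + 1)) := by
    rw [← runningMean, hmean, abs_runningMean_half_sub_one ht']
  have dist_current : |α - Y| = (1 / 2 - α) / t := by
    have sub_current : α - Y = (1 / 2 - α) / t := by
      rw [hmean, runningMean_sub_self ht.ne' ht'.ne']
    rw [sub_current, abs_of_nonneg (div_nonneg (sub_nonneg.2 hα) ht.le)]
  rw [dist_no_violation, dist_violation, dist_current, sub_self, mul_zero, zero_add]
  exact ⟨rfl, rfl, half_step_sub_pos_iff ht⟩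

end LinearOrderedField

theorem stmt_3 (t : ℕ) (ht : 1 ≤ t) (α : ℝ)
    (hα0 : 1 / (2 * ((t : ℝ) + 1)) < α) (hα1 : α < 1 / 2)
    (Y : ℝ) (hY : Y = (((t : ℝ) + 1) * α - 1 / 2) / (t : ℝ)) :
    ∀ p : ℝ, 0 ≤ p → p ≤ 1 →
      p * (|α - ((t : ℝ) * Y + 1) / ((t : ℝ) + 1)| - |α - (t : ℝ) * Y / ((t : ℝ) + 1)|)
          + |α - (t : ℝ) * Y / ((t : ℝ) + 1)| - |α - Y| > 0 ∧
      |α - ((t : ℝ) * Y + 1) / ((t : ℝ) + 1)| - |α - (t : ℝ) * Y / ((t : ℝ) + 1)| = 0 ∧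
      p * (|α - ((t : ℝ) * Y + 1) / ((t : ℝ) + 1)| - |α - (t : ℝ) * Y / ((t : ℝ) + 1)|)
          + |α - (t : ℝ) * Y / ((t : ℝ) + 1)| - |α - Y|
        = 1 / (2 * ((t : ℝ) + 1)) - (1 / 2 - α) / (t : ℝ) ∧
      (0 < 1 / (2 * ((t : ℝ) + 1)) - (1 / 2 - α) / (t : ℝ) ↔ 1 / (2 * ((t : ℝ) + 1)) < α) := by
  intro p _ _
  obtain ⟨hβ, hΔ, hpos⟩ := stmt_3_general (Nat.cast_pos.2 ht) hα1.le hY p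
  exact ⟨hΔ ▸ hpos.2 hα0, hβ, hΔ, hpos⟩
end

section
/- Let t ≥ 1 be a natural number, let α be real with 1/(2(t+1)) < α < 1/2, and let Y(t) ∈ [0,1]. Define the ideal violation V*(t+1) := 1 if β(t, α, Y(t)) < 0 and V*(t+1) := 0 otherwise, and set Y(t+1) := (t·Y(t) + V*(t+1))/(t+1). Then |α − Y(t+1)| ≤ |α − Y(t)| if and only if Y(t) does not lie in the critical region κ(α, t). -/
/-- The critical region `κ(α, t) := ( ((t+1)α − 1/2)/(t + 1/2), (t+1)α/(t + 1/2) )`. -/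
def kappa (α : ℝ) (t : ℕ) : Set ℝ :=
  Set.Ioo ((((t : ℝ) + 1) * α - 1 / 2) / ((t : ℝ) + 1 / 2)) (((t : ℝ) + 1) * α / ((t : ℝ) + 1 / 2))

/-!
Recording a sample `v` moves the average `Y` strictly towards `v`, so the gap to `α` does not
increase exactly when `α` lies at or beyond the midpoint of the old and new averages. For `v = 1`
and `v = 0` this condition reads `Y ≤ inf κ` and `sup κ ≤ Y` respectively. The same midpoint
criterion, applied to the two candidate averages, shows that `β < 0` means `tY + 1/2 < (t + 1)α`;
hence when the policy picks `v = 1` the average is below `sup κ`, and when it picks `v = 0` the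
average is above `inf κ`, so only one endpoint of `κ` matters in each case.
-/

section Midpoint

variable {R : Type*} [CommRing R] [LinearOrder R] [IsStrictOrderedRing R] {a x y : R}

theorem abs_sub_le_abs_sub_iff_two_mul_le_add (hxy : x < y) :
    |a - x| ≤ |a - y| ↔ 2 * a ≤ x + y := by
  have sq_sub_sq_factor : (a - y) ^ 2 - (a - x) ^ 2 = (y - x) * (x + y - 2 * a) := by ring
  rw [← sq_le_sq, ← sub_nonneg, sq_sub_sq_factor, mul_nonneg_iff_of_pos_left (sub_pos.2 hxy),
    sub_nonneg]

theorem abs_sub_le_abs_sub_iff_add_le_two_mul (hxy : x < y) :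
    |a - y| ≤ |a - x| ↔ x + y ≤ 2 * a := by
  have sq_sub_sq_factor : (a - x) ^ 2 - (a - y) ^ 2 = (y - x) * (2 * a - (x + y)) := by ring
  rw [← sq_le_sq, ← sub_nonneg, sq_sub_sq_factor, mul_nonneg_iff_of_pos_left (sub_pos.2 hxy),
    sub_nonneg]

end Midpoint

/-- The average of `t + 1` samples of which the first `t` have average `Y` and the last is `v`:
the paper's `Y(t+1)` as a function of `Y(t)` and `V(t+1)`. -/
noncomputable def updatedAverage (t : ℕ) (Y v : ℝ) : ℝ :=
  (t * Y + v) / (t + 1)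

/-- The paper's `V*(t+1)`: the violation indicator chosen by the ideal control policy, as a real
number. A tie `β = 0` is resolved in favour of no violation. -/
noncomputable def idealViolation (t : ℕ) (α Y : ℝ) : ℝ :=
  if beta t α Y < 0 then 1 else 0

section UpdatedAverage

variable {t : ℕ} {α Y v w : ℝ}

theorem updatedAverage_lt_updatedAverage (hvw : v < w) :
    updatedAverage t Y v < updatedAverage t Y w := by
  unfold updatedAverage
  gcongr

theorem updatedAverage_self : updatedAverage t Y Y = Y := by
  unfold updatedAverage
  field_simp

theorem lt_updatedAverage (hYv : Y < v) : Y < updatedAverage t Y v := by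
  simpa only [updatedAverage_self] using updatedAverage_lt_updatedAverage (t := t) (Y := Y) hYv

theorem updatedAverage_lt (hvY : v < Y) : updatedAverage t Y v < Y := by
  simpa only [updatedAverage_self] using updatedAverage_lt_updatedAverage (t := t) (Y := Y) hvY

theorem beta_eq_abs_sub_updatedAverage_sub :
    beta t α Y = |α - updatedAverage t Y 1| - |α - updatedAverage t Y 0| := by
  simp only [beta, updatedAverage, add_div, add_zero, sub_add_eq_sub_sub]

theorem beta_neg_iff : beta t α Y < 0 ↔ t * Y + 1 / 2 < (t + 1) * α := by
  have sum_candidates : updatedAverage t Y 0 + updatedAverage t Y 1 =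
      2 * (t * Y + 1 / 2) / (t + 1) := by
    unfold updatedAverage
    ring
  rw [beta_eq_abs_sub_updatedAverage_sub, sub_neg, ← not_le,
    abs_sub_le_abs_sub_iff_two_mul_le_add (updatedAverage_lt_updatedAverage zero_lt_one), not_le,
    sum_candidates, div_lt_iff₀ (by positivity)]
  constructor <;> intro h <;> linarith

theorem abs_sub_updatedAverage_one_le_iff (hY : Y < 1) :
    |α - updatedAverage t Y 1| ≤ |α - Y| ↔
      Y ≤ ((t + 1) * α - 1 / 2) / (t + 1 / 2) := by
  have sum_averages : Y + updatedAverage t Y 1 = 2 * (Y * (t + 1 / 2) + 1 / 2) / (t + 1) := by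
    unfold updatedAverage
    field_simp
    ring
  rw [abs_sub_le_abs_sub_iff_add_le_two_mul (lt_updatedAverage hY), sum_averages,
    div_le_iff₀ (by positivity), le_div_iff₀ (by positivity)]
  constructor <;> intro h <;> linarith

theorem abs_sub_updatedAverage_zero_le_iff (hY : 0 < Y) :
    |α - updatedAverage t Y 0| ≤ |α - Y| ↔ (t + 1) * α / (t + 1 / 2) ≤ Y := by
  have sum_averages : updatedAverage t Y 0 + Y = 2 * (Y * (t + 1 / 2)) / (t + 1) := by
    unfold updatedAverage
    field_simp
    ring
  rw [abs_sub_le_abs_sub_iff_two_mul_le_add (updatedAverage_lt hY), sum_averages,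
    le_div_iff₀ (by positivity), div_le_iff₀ (by positivity)]
  constructor <;> intro h <;> linarith

theorem lt_one_of_beta_neg (hα : α ≤ 1 - 1 / (2 * ((t : ℝ) + 1))) (hβ : beta t α Y < 0) :
    Y < 1 := by
  have threshold_le : (t + 1) * α ≤ t + 1 / 2 := by
    calc (t + 1) * α ≤ (t + 1) * (1 - 1 / (2 * ((t : ℝ) + 1))) := by gcongr
      _ = t + 1 / 2 := by field_simp; ring
  have mul_lt_mul_one : t * Y < t * 1 := by linarith [beta_neg_iff.1 hβ]
  exact lt_of_mul_lt_mul_left mul_lt_mul_one t.cast_nonneg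

theorem pos_of_beta_nonneg (hα : 1 / (2 * ((t : ℝ) + 1)) < α) (hβ : 0 ≤ beta t α Y) :
    0 < Y := by
  have lt_threshold : 1 / 2 < (t + 1) * α := by
    rw [div_lt_iff₀ (by positivity)] at hα
    linarith
  have mul_zero_lt : t * 0 < t * Y := by linarith [not_lt.1 (mt beta_neg_iff.2 hβ.not_gt)]
  exact lt_of_mul_lt_mul_left mul_zero_lt t.cast_nonneg

theorem notMem_kappa_iff_of_beta_neg (hY : Y < 1) (hβ : beta t α Y < 0) :
    Y ∉ kappa α t ↔ Y ≤ ((t + 1) * α - 1 / 2) / (t + 1 / 2) := by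
  have lt_sup : Y < (t + 1) * α / (t + 1 / 2) := by
    rw [lt_div_iff₀ (by positivity)]
    linarith [beta_neg_iff.1 hβ]
  simp only [kappa, Set.mem_Ioo, lt_sup, and_true, not_lt]

theorem notMem_kappa_iff_of_beta_nonneg (hY : 0 < Y) (hβ : 0 ≤ beta t α Y) :
    Y ∉ kappa α t ↔ (t + 1) * α / (t + 1 / 2) ≤ Y := by
  have inf_lt : ((t + 1) * α - 1 / 2) / (t + 1 / 2) < Y := by
    rw [div_lt_iff₀ (by positivity)]
    linarith [not_lt.1 (mt beta_neg_iff.2 hβ.not_gt)]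
  simp only [kappa, Set.mem_Ioo, inf_lt, true_and, not_lt]

end UpdatedAverage

theorem stmt_5_general {t : ℕ} {α : ℝ} (Y : ℝ) (hα₀ : 1 / (2 * ((t : ℝ) + 1)) < α)
    (hα₁ : α ≤ 1 - 1 / (2 * ((t : ℝ) + 1))) :
    |α - updatedAverage t Y (idealViolation t α Y)| ≤ |α - Y| ↔ Y ∉ kappa α t := by
  rcases lt_or_ge (beta t α Y) 0 with hβ | hβ
  · have hY : Y < 1 := lt_one_of_beta_neg hα₁ hβ
    rw [idealViolation, if_pos hβ, abs_sub_updatedAverage_one_le_iff hY,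
      notMem_kappa_iff_of_beta_neg hY hβ]
  · have hY : 0 < Y := pos_of_beta_nonneg hα₀ hβ
    rw [idealViolation, if_neg hβ.not_gt, abs_sub_updatedAverage_zero_le_iff hY,
      notMem_kappa_iff_of_beta_nonneg hY hβ]

theorem stmt_5 (t : ℕ) (ht : 1 ≤ t) (α : ℝ)
    (hα0 : 1 / (2 * ((t : ℝ) + 1)) < α) (hα1 : α < 1 / 2)
    (Y : ℝ) (hY0 : 0 ≤ Y) (hY1 : Y ≤ 1)
    (Vstar : ℝ) (hVstar : Vstar = if beta t α Y < 0 then 1 else 0)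
    (Y' : ℝ) (hY' : Y' = ((t : ℝ) * Y + Vstar) / ((t : ℝ) + 1)) :
    |α - Y'| ≤ |α - Y| ↔ Y ∉ kappa α t := by
  subst hVstar hY'
  exact stmt_5_general Y hα0 (by linarith)
end

section
/- (Lemma 1) Fix a natural number t0 ≥ 1 and a real α with 1/(2(t0+1)) < α < 1/2. Let Y follow the ideal violation dynamics started from Y(t0) ∈ [0,1], and suppose Y(t0) ∉ κ(α, t0). Then there exists a time t' > t0 such that Y(t') ∈ κ(α, t'). -/
/-!
Along the dynamics, the deficit `D t = (t + 1) α - t Y t` increases by `α` when `D t ≤ 1/2` and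
decreases by `1 - α` otherwise, and `Y t ∈ κ(α, t)` says that `D t` lies strictly between `Y t / 2`
and `(1 + Y t) / 2`. The deficit stays bounded, so `Y t → α`, and this interval of length `1/2`
converges to a fixed one. Unless `α = 1/2`, one of the two steps `α` and `1 - α` is shorter than
`1/2` and cannot jump over the interval; since `D` can neither increase forever below the interval
nor decrease forever above it, it visits the interval infinitely often.
-/

open Filter Set Topology

section Steps

variable {K : Type*} [Field K] [LinearOrder K] [IsStrictOrderedRing K] [Archimedean K]
  {u : ℕ → K} {a b p q : K}

theorem tendsto_atTop_of_eventually_add_le (hp : 0 < p) (hu : ∀ᶠ n in atTop, u n + p ≤ u (n + 1)) :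
    Tendsto u atTop atTop := by
  obtain ⟨N, hN⟩ := eventually_atTop.1 hu
  have linear_growth : ∀ n : ℕ, u N + n * p ≤ u (n + N) := by
    intro n
    induction n with
    | zero => simp
    | succ n ih =>
      have hstep := hN (n + N) (Nat.le_add_left N n)
      rw [add_right_comm n N 1] at hstep
      push_cast
      linarith
  rw [← tendsto_add_atTop_iff_nat N]
  exact tendsto_atTop_mono linear_growth <|
    tendsto_atTop_add_const_left _ _ (tendsto_natCast_atTop_atTop.atTop_mul_const hp)

theorem frequently_gt_of_add_le (hp : 0 < p)
    (hu : ∀ᶠ n in atTop, u n ≤ a → u n + p ≤ u (n + 1)) : ∃ᶠ n in atTop, a < u n := by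
  intro hle
  simp only [not_lt] at hle
  have htop : Tendsto u atTop atTop :=
    tendsto_atTop_of_eventually_add_le hp (hle.mp hu)
  obtain ⟨n, hn_le, hn_gt⟩ := (hle.and (htop.eventually_gt_atTop a)).exists
  exact hn_gt.not_ge hn_le

theorem frequently_lt_of_le_sub (hq : 0 < q)
    (hu : ∀ᶠ n in atTop, b ≤ u n → u (n + 1) ≤ u n - q) : ∃ᶠ n in atTop, u n < b := by
  have hneg : ∃ᶠ n in atTop, -b < -u n := by
    refine frequently_gt_of_add_le hq (hu.mono fun n hn hle => ?_)
    linarith [hn (neg_le_neg_iff.1 hle)]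
  simpa only [neg_lt_neg_iff] using hneg

theorem frequently_mem_Ioo_of_up_step_lt (hp : 0 < p) (hq : 0 < q) (hpab : p < b - a)
    (hup : ∀ᶠ n in atTop, u n ≤ a → u (n + 1) = u n + p)
    (hdown : ∀ᶠ n in atTop, b ≤ u n → u (n + 1) = u n - q) :
    ∃ᶠ n in atTop, u n ∈ Ioo a b := by
  intro havoid
  have exceeds : ∃ᶠ n in atTop, a < u n :=
    frequently_gt_of_add_le hp (hup.mono fun n hn hle => (hn hle).ge)
  have drops : ∃ᶠ n in atTop, u n < b :=
    frequently_lt_of_le_sub hq (hdown.mono fun n hn hle => (hn hle).le)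
  obtain ⟨N, hN⟩ := eventually_atTop.1 (hup.and havoid)
  have le_of_lt_b : ∀ n ≥ N, u n < b → u n ≤ a := fun n hn hlt =>
    not_lt.1 fun hgt => (hN n hn).2 ⟨hgt, hlt⟩
  obtain ⟨M, hNM, hMb⟩ := frequently_atTop.1 drops N
  have stays_low : ∀ n ≥ M, u n ≤ a := by
    intro n hn
    induction n, hn using Nat.le_induction with
    | base => exact le_of_lt_b M hNM hMb
    | succ n hn ih =>
      have hstep := (hN n (hNM.trans hn)).1 ih
      exact le_of_lt_b (n + 1) (by lia) (by linarith)
  obtain ⟨n, hn, hlt⟩ := frequently_atTop.1 exceeds M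
  exact hlt.not_ge (stays_low n hn)

theorem frequently_mem_Ioo_of_min_step_lt (hp : 0 < p) (hq : 0 < q) (hpq : min p q < b - a)
    (hup : ∀ᶠ n in atTop, u n ≤ a → u (n + 1) = u n + p)
    (hdown : ∀ᶠ n in atTop, b ≤ u n → u (n + 1) = u n - q) :
    ∃ᶠ n in atTop, u n ∈ Ioo a b := by
  rcases min_lt_iff.1 hpq with hpab | hqab
  · exact frequently_mem_Ioo_of_up_step_lt hp hq hpab hup hdown
  · have hneg : ∃ᶠ n in atTop, -u n ∈ Ioo (-b) (-a) := by
      refine frequently_mem_Ioo_of_up_step_lt hq hp (by linarith)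
        (hdown.mono fun n hn hle => ?_) (hup.mono fun n hn hle => ?_)
      · linarith [hn (neg_le_neg_iff.1 hle)]
      · linarith [hn (neg_le_neg_iff.1 hle)]
    exact hneg.mono fun n hn => ⟨neg_lt_neg_iff.1 hn.2, neg_lt_neg_iff.1 hn.1⟩

end Steps

/-- The amount by which a running total `t * y` of violations after `t` steps falls short of the
target `(t + 1) * α` for the next step. -/
def deficit (α : ℝ) (t : ℕ) (y : ℝ) : ℝ := (t + 1) * α - t * y

theorem beta_neg_iff_lt_deficit {t : ℕ} {α y : ℝ} :
    beta t α y < 0 ↔ 1 / 2 < deficit α t y := by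
  have hc : 0 < 1 / ((t : ℝ) + 1) := by positivity
  have hdist : α - t * y / (t + 1) = deficit α t y * (1 / ((t : ℝ) + 1)) := by
    unfold deficit
    field_simp
  rw [beta, hdist, ← sub_one_mul, abs_mul, abs_mul, ← sub_mul, ← neg_pos, ← neg_mul,
    mul_pos_iff_of_pos_right (abs_pos_of_pos hc), neg_pos, sub_neg, ← sq_lt_sq]
  constructor <;> intro h <;> linarith

theorem mem_kappa_iff_deficit_mem_Ioo {t : ℕ} {α y : ℝ} :
    y ∈ kappa α t ↔ deficit α t y ∈ Ioo (y / 2) ((1 + y) / 2) := by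
  have ht : (0 : ℝ) < t + 1 / 2 := by positivity
  rw [kappa, mem_Ioo, mem_Ioo, div_lt_iff₀ ht, lt_div_iff₀ ht, deficit]
  constructor <;> rintro ⟨hleft, hright⟩ <;> constructor <;> linarith

/-- From time `t₀` on, `Y` follows the ideal violation dynamics with target rate `α`: `Y t` is the
running average of violations, and a violation occurs at time `t + 1` exactly when
`β(t, α, Y t) < 0`. The starting value `Y t₀` is an arbitrary real. -/
def IsIdealViolation (α : ℝ) (t₀ : ℕ) (Y : ℕ → ℝ) : Prop :=
  ∀ t, t₀ ≤ t → Y (t + 1) = (t * Y t + (if beta t α (Y t) < 0 then 1 else 0)) / ((t : ℝ) + 1)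

namespace IsIdealViolation

variable {α : ℝ} {t₀ t : ℕ} {Y : ℕ → ℝ}

theorem deficit_succ (hY : IsIdealViolation α t₀ Y) (ht : t₀ ≤ t) :
    deficit α (t + 1) (Y (t + 1)) =
      deficit α t (Y t) + α - if 1 / 2 < deficit α t (Y t) then 1 else 0 := by
  have htotal : ((t : ℝ) + 1) * Y (t + 1) =
      t * Y t + if 1 / 2 < deficit α t (Y t) then 1 else 0 := by
    simp only [hY t ht, beta_neg_iff_lt_deficit]
    field_simp
  rw [deficit, Nat.cast_add_one, htotal]
  simp only [deficit]
  ring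

theorem deficit_succ_of_le (hY : IsIdealViolation α t₀ Y) (ht : t₀ ≤ t)
    (hle : deficit α t (Y t) ≤ 1 / 2) :
    deficit α (t + 1) (Y (t + 1)) = deficit α t (Y t) + α := by
  rw [hY.deficit_succ ht, if_neg hle.not_gt, sub_zero]

theorem deficit_succ_of_lt (hY : IsIdealViolation α t₀ Y) (ht : t₀ ≤ t)
    (hlt : 1 / 2 < deficit α t (Y t)) :
    deficit α (t + 1) (Y (t + 1)) = deficit α t (Y t) - (1 - α) := by
  rw [hY.deficit_succ ht, if_pos hlt, sub_sub_eq_add_sub]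

theorem abs_deficit_le (hY : IsIdealViolation α t₀ Y) (hα : α ∈ Icc 0 1) (ht : t₀ ≤ t) :
    |deficit α t (Y t)| ≤ max |deficit α t₀ (Y t₀)| (3 / 2) := by
  have hbound : 3 / 2 ≤ max |deficit α t₀ (Y t₀)| (3 / 2) := le_max_right _ _
  induction t, ht using Nat.le_induction with
  | base => exact le_max_left _ _
  | succ t ht ih =>
    rw [abs_le] at ih ⊢
    rcases le_or_gt (deficit α t (Y t)) (1 / 2) with hle | hlt
    · rw [hY.deficit_succ_of_le ht hle]
      constructor <;> linarith [hα.1, hα.2]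
    · rw [hY.deficit_succ_of_lt ht hlt]
      constructor <;> linarith [hα.1, hα.2]

theorem tendsto_target (hY : IsIdealViolation α t₀ Y) (hα : α ∈ Icc 0 1) :
    Tendsto Y atTop (𝓝 α) := by
  have hbounded : ∀ᶠ t in atTop,
      |α - deficit α t (Y t)| ≤ |α| + max |deficit α t₀ (Y t₀)| (3 / 2) := by
    filter_upwards [eventually_ge_atTop t₀] with t ht
    exact (abs_sub _ _).trans (by gcongr; exact hY.abs_deficit_le hα ht)
  have herror : Tendsto (fun t : ℕ => (α - deficit α t (Y t)) / t) atTop (𝓝 0) :=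
    tendsto_bdd_div_atTop_nhds_zero (hbounded.mono fun t ht => (abs_le.1 ht).1)
      (hbounded.mono fun t ht => (abs_le.1 ht).2) tendsto_natCast_atTop_atTop
  have hlim : Tendsto (fun t : ℕ => α + (α - deficit α t (Y t)) / t) atTop (𝓝 α) := by
    simpa using herror.const_add α
  refine hlim.congr' ?_
  filter_upwards [eventually_ne_atTop 0] with t ht
  unfold deficit
  field_simp
  ring

theorem frequently_deficit_mem_Ioo (hY : IsIdealViolation α t₀ Y) (hα : α ∈ Ioo 0 1) {a b : ℝ}
    (ha : a ≤ 1 / 2) (hb : 1 / 2 < b) (hab : min α (1 - α) < b - a) :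
    ∃ᶠ t in atTop, deficit α t (Y t) ∈ Ioo a b := by
  refine frequently_mem_Ioo_of_min_step_lt hα.1 (sub_pos.2 hα.2) hab ?_ ?_
  · filter_upwards [eventually_ge_atTop t₀] with t ht hle
    exact hY.deficit_succ_of_le ht (hle.trans ha)
  · filter_upwards [eventually_ge_atTop t₀] with t ht hle
    exact hY.deficit_succ_of_lt ht (hb.trans_le hle)

end IsIdealViolation

theorem stmt_7_general {α : ℝ} {t₀ : ℕ} {Y : ℕ → ℝ} (hY : IsIdealViolation α t₀ Y)
    (hα : α ∈ Ioo 0 1) (hα_half : α ≠ 1 / 2) : ∃ᶠ t in atTop, Y t ∈ kappa α t := by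
  have hmin : min α (1 - α) < 1 / 2 := by
    rcases hα_half.lt_or_gt with hlt | hgt
    · exact min_lt_of_left_lt hlt
    · exact min_lt_of_right_lt (by linarith)
  obtain ⟨ε, hε, hε_lt⟩ : ∃ ε, 0 < ε ∧
      ε < min (min (α / 2) ((1 - α) / 2)) ((1 / 2 - min α (1 - α)) / 2) :=
    exists_between <| lt_min
      (lt_min (half_pos hα.1) (half_pos (sub_pos.2 hα.2))) (half_pos (sub_pos.2 hmin))
  obtain ⟨⟨hε_left, hε_right⟩, hε_gap⟩ := by simpa only [lt_min_iff] using hε_lt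
  have visits : ∃ᶠ t in atTop, deficit α t (Y t) ∈ Ioo (α / 2 + ε) ((1 + α) / 2 - ε) :=
    hY.frequently_deficit_mem_Ioo hα (by linarith) (by linarith) (by linarith)
  have near_target : ∀ᶠ t in atTop, Y t ∈ Ioo (α - ε) (α + ε) :=
    (hY.tendsto_target (Ioo_subset_Icc_self hα)).eventually_mem
      (Ioo_mem_nhds (by linarith) (by linarith))
  refine (visits.and_eventually near_target).mono fun t ⟨hdeficit, hclose⟩ => ?_
  rw [mem_kappa_iff_deficit_mem_Ioo]
  constructor <;> linarith [hdeficit.1, hdeficit.2, hclose.1, hclose.2]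

theorem stmt_7 (t0 : ℕ) (ht0 : 1 ≤ t0) (α : ℝ)
    (hα0 : 1 / (2 * ((t0 : ℝ) + 1)) < α) (hα1 : α < 1 / 2)
    (Y : ℕ → ℝ) (hY0 : 0 ≤ Y t0) (hY1 : Y t0 ≤ 1)
    (hdyn : ∀ t, t0 ≤ t →
      Y (t + 1) = ((t : ℝ) * Y t + (if beta t α (Y t) < 0 then 1 else 0)) / ((t : ℝ) + 1))
    (hstart : Y t0 ∉ kappa α t0) :
    ∃ t' : ℕ, t0 < t' ∧ Y t' ∈ kappa α t' := by
  have hα_pos : 0 < α := lt_trans (by positivity) hα0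
  exact frequently_atTop'.1
    (stmt_7_general (t₀ := t0) hdyn ⟨hα_pos, by linarith⟩ hα1.ne) t0
end

section
/- (Lemma 2) Fix a natural number t0 ≥ 1 and a real α with 1/(2(t0+1)) < α < 1/2. Let Y follow the ideal violation dynamics started from Y(t0) ∈ [0,1], and suppose Y(t0) ∈ κ(α, t0). Then there exists a time t' > t0 such that Y(t') ∉ κ(α, t'). -/
/-!
Write `d t = (t + 1) α - t Y t` for the deficit. Then `Y t ∈ κ(α, t)` says that `d t` lies strictly
between `Y t / 2` and `(1 + Y t) / 2`, a window of width `1/2`, while a step of the dynamics changes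
`d` by `α` (no violation) or by `α - 1` (violation). If `α ≤ 1/2`, a violation lowers `d` by at
least `1/2` while the window moves up with `Y`, so it throws `Y` out of the critical region at once,
whatever rule decided on the violation. Hence a trajectory that stays inside has no violations, so
`t Y t` is constant and `Y t → 0`; but the critical regions shrink to `α`, which is positive because
they contain nonnegative points. The case `1/2 ≤ α` reduces to this one by replacing `Y` and `α`
with `1 - Y` and `1 - α`, which exchanges violations and non-violations.
-/

open Filter Topology

section CriticalRegion

variable {α y : ℝ} {t : ℕ}

theorem mem_kappa_iff :
    y ∈ kappa α t ↔ y / 2 < (t + 1) * α - t * y ∧ (t + 1) * α - t * y < (1 + y) / 2 := by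
  have ht : (0 : ℝ) < t + 1 / 2 := by positivity
  rw [kappa, Set.mem_Ioo, div_lt_iff₀ ht, lt_div_iff₀ ht]
  constructor <;> rintro ⟨h₁, h₂⟩ <;> constructor <;> linarith

theorem one_sub_mem_kappa_one_sub_iff : 1 - y ∈ kappa (1 - α) t ↔ y ∈ kappa α t := by
  rw [mem_kappa_iff, mem_kappa_iff]
  constructor <;> rintro ⟨h₁, h₂⟩ <;> constructor <;> linarith

theorem pos_of_mem_kappa_of_nonneg (hy : y ∈ kappa α t) (hy₀ : 0 ≤ y) : 0 < α := by
  have hα : 0 < (t + 1) * α / ((t : ℝ) + 1 / 2) := hy₀.trans_lt hy.2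
  have ht : (0 : ℝ) < t + 1 / 2 := by positivity
  exact pos_of_mul_pos_right ((div_pos_iff_of_pos_right ht).1 hα) (by positivity)

theorem notMem_kappa_succ_of_violation (hα : α ≤ 1 / 2) (hy₁ : y ≤ 1) (hy : y ∈ kappa α t) :
    (t * y + 1) / (t + 1) ∉ kappa α (t + 1) := by
  intro hsucc
  set z := (t * y + 1) / ((t : ℝ) + 1) with hz
  have ht : (0 : ℝ) < t + 1 := by positivity
  have hmul : (t + 1) * z = t * y + 1 := by rw [hz]; field_simp
  have hyz : y ≤ z := by rw [hz, le_div_iff₀ ht]; linarith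
  have hbelow := (mem_kappa_iff.1 hy).2
  have habove := (mem_kappa_iff.1 hsucc).1
  push_cast at habove
  linarith

theorem tendsto_of_eventually_mem_kappa {Y : ℕ → ℝ} (hY : ∀ᶠ t in atTop, Y t ∈ kappa α t) :
    Tendsto Y atTop (𝓝 α) := by
  have endpoint (c : ℝ) :
      Tendsto (fun t : ℕ ↦ (((t : ℝ) + 1) * α - c) / ((t : ℝ) + 1 / 2)) atTop (𝓝 α) := by
    have hdiv : Tendsto (fun t : ℕ ↦ (α / 2 - c) / ((t : ℝ) + 1 / 2)) atTop (𝓝 0) :=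
      tendsto_const_nhds.div_atTop
        (tendsto_atTop_add_const_right _ _ tendsto_natCast_atTop_atTop)
    have hsum := hdiv.const_add α
    rw [add_zero] at hsum
    refine hsum.congr fun t ↦ ?_
    field_simp
    ring
  refine tendsto_of_tendsto_of_tendsto_of_le_of_le' (endpoint (1 / 2)) (endpoint 0)
    (hY.mono fun t ht ↦ ht.1.le) (hY.mono fun t ht ↦ ?_)
  simpa only [sub_zero] using ht.2.le

end CriticalRegion

theorem tendsto_zero_of_no_violation {t₀ : ℕ} {Y : ℕ → ℝ}
    (hY : ∀ t, t₀ ≤ t → Y (t + 1) = t * Y t / (t + 1)) : Tendsto Y atTop (𝓝 0) := by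
  have hconst (t : ℕ) (ht : t₀ ≤ t) : t * Y t = t₀ * Y t₀ := by
    induction t, ht using Nat.le_induction with
    | base => rfl
    | succ t ht ih =>
      rw [hY t ht, ← ih]
      push_cast
      field_simp
  refine (tendsto_const_div_atTop_nhds_zero_nat (t₀ * Y t₀)).congr' ?_
  filter_upwards [eventually_ge_atTop t₀, eventually_gt_atTop 0] with t ht ht_pos
  rw [← hconst t ht, mul_div_cancel_left₀ _ (by positivity)]

/-- From time `t₀` on, `Y t` is the running average of `t` observations, each new observation `v`
being `0` or `1`. This is the violation dynamics with no rule imposed on the choice of `v`. -/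
def IsBinaryRunningAverage (t₀ : ℕ) (Y : ℕ → ℝ) : Prop :=
  ∀ t, t₀ ≤ t → ∃ v : ℝ, (v = 0 ∨ v = 1) ∧ Y (t + 1) = (t * Y t + v) / (t + 1)

namespace IsBinaryRunningAverage

variable {t₀ : ℕ} {α : ℝ} {Y : ℕ → ℝ}

theorem one_sub (hY : IsBinaryRunningAverage t₀ Y) :
    IsBinaryRunningAverage t₀ fun t ↦ 1 - Y t := by
  intro t ht
  obtain ⟨v, hv, hstep⟩ := hY t ht
  refine ⟨1 - v, ?_, ?_⟩
  · rcases hv with rfl | rfl <;> norm_num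
  · simp only [hstep]
    field_simp
    ring

theorem mem_Icc (hY : IsBinaryRunningAverage t₀ Y) (h₀ : Y t₀ ∈ Set.Icc 0 1) {t : ℕ}
    (ht : t₀ ≤ t) : Y t ∈ Set.Icc 0 1 := by
  induction t, ht using Nat.le_induction with
  | base => exact h₀
  | succ t ht ih =>
    obtain ⟨v, hv, hstep⟩ := hY t ht
    obtain ⟨hv₀, hv₁⟩ : 0 ≤ v ∧ v ≤ 1 := by rcases hv with rfl | rfl <;> norm_num
    have hmul₀ : 0 ≤ t * Y t := mul_nonneg t.cast_nonneg ih.1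
    have hmul₁ : t * Y t ≤ t := mul_le_of_le_one_right t.cast_nonneg ih.2
    rw [hstep]
    exact ⟨by positivity, div_le_one_of_le₀ (by linarith) (by positivity)⟩

theorem exists_notMem_kappa_of_le_half (hY : IsBinaryRunningAverage t₀ Y)
    (h₀ : Y t₀ ∈ Set.Icc 0 1) (hα : α ≤ 1 / 2) : ∃ t, t₀ < t ∧ Y t ∉ kappa α t := by
  by_contra! hmem
  have hno_violation (t : ℕ) (ht : t₀ + 1 ≤ t) : Y (t + 1) = t * Y t / (t + 1) := by
    obtain ⟨v, rfl | rfl, hstep⟩ := hY t (by lia)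
    · rwa [add_zero] at hstep
    · have hexit := notMem_kappa_succ_of_violation hα (hY.mem_Icc h₀ (by lia)).2 (hmem t ht)
      exact absurd (hmem (t + 1) (by lia)) (hstep ▸ hexit)
  have hα_pos : 0 < α :=
    pos_of_mem_kappa_of_nonneg (hmem (t₀ + 1) t₀.lt_succ_self) (hY.mem_Icc h₀ t₀.le_succ).1
  have hα_zero : α = 0 :=
    tendsto_nhds_unique
      (tendsto_of_eventually_mem_kappa ((eventually_gt_atTop t₀).mono hmem))
      (tendsto_zero_of_no_violation hno_violation)
  exact hα_pos.ne' hα_zero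

end IsBinaryRunningAverage

theorem stmt_8_general {t₀ : ℕ} {Y : ℕ → ℝ} (α : ℝ) (hY : IsBinaryRunningAverage t₀ Y)
    (h₀ : Y t₀ ∈ Set.Icc 0 1) : ∃ t, t₀ < t ∧ Y t ∉ kappa α t := by
  rcases le_total α (1 / 2) with hα | hα
  · exact hY.exists_notMem_kappa_of_le_half h₀ hα
  · obtain ⟨t, ht, hexit⟩ := hY.one_sub.exists_notMem_kappa_of_le_half (α := 1 - α)
      (Set.Icc.mem_iff_one_sub_mem.1 h₀) (by linarith)
    exact ⟨t, ht, one_sub_mem_kappa_one_sub_iff.not.1 hexit⟩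

theorem stmt_8 (t0 : ℕ) (ht0 : 1 ≤ t0) (α : ℝ)
    (hα0 : 1 / (2 * ((t0 : ℝ) + 1)) < α) (hα1 : α < 1 / 2)
    (Y : ℕ → ℝ) (hY0 : 0 ≤ Y t0) (hY1 : Y t0 ≤ 1)
    (hdyn : ∀ t, t0 ≤ t →
      Y (t + 1) = ((t : ℝ) * Y t + (if beta t α (Y t) < 0 then 1 else 0)) / ((t : ℝ) + 1))
    (hstart : Y t0 ∈ kappa α t0) :
    ∃ t' : ℕ, t0 < t' ∧ Y t' ∉ kappa α t' := by
  exact stmt_8_general α (fun t ht ↦ ⟨_, (ite_eq_or_eq _ _ _).symm, hdyn t ht⟩) ⟨hY0, hY1⟩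
end

section
/- (Theorem 2) Fix a natural number t0 ≥ 1 and a real α with 1/(2(t0+1)) < α < 1/2. Let Y follow the ideal violation dynamics started from any initial value Y(t0) ∈ [0,1]. Then the time-average of violations converges to the maximum allowable violation probability: lim_{t→∞} Y(t) = α. -/
open Filter Topology

/-!
The cumulative excess `D t = t * (Y t - α)` satisfies `D (t + 1) = D t - α + V`, and the sign of
`β` selects whichever `V ∈ {0, 1}` makes `|D (t + 1)|` smaller: `V = 1` exactly when
`D t - α < -1/2`. For `0 ≤ α ≤ 1` a step therefore either moves `D` towards `0` or lands in
`[-1/2, 1/2]`, so `D` stays bounded and `|Y t - α| = |D t| / t` tends to `0`.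
-/

theorem abs_sub_lt_abs_self_iff {K : Type*} [Field K] [LinearOrder K] [IsStrictOrderedRing K]
    {x c : K} (hc : 0 < c) : |x - c| < |x| ↔ c / 2 < x := by
  have sq_diff : x ^ 2 - (x - c) ^ 2 = 2 * c * (x - c / 2) := by ring
  rw [← sq_lt_sq, ← sub_pos, sq_diff, mul_pos_iff_of_pos_left (by positivity), sub_pos]

theorem abs_sub_add_ite_le_max {K : Type*} [Field K] [LinearOrder K] [IsStrictOrderedRing K]
    {α : K} (hα0 : 0 ≤ α) (hα1 : α ≤ 1) (d : K) :
    |d - α + if d - α < -(1 / 2) then 1 else 0| ≤ max |d| (1 / 2) := by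
  have hd : -max |d| (1 / 2) ≤ d ∧ d ≤ max |d| (1 / 2) := abs_le.mp (le_max_left _ _)
  have half_le : 1 / 2 ≤ max |d| (1 / 2) := le_max_right _ _
  rw [abs_le]
  split_ifs with h <;> constructor <;> linarith

theorem tendsto_of_norm_natCast_smul_sub_le {E : Type*} [NormedAddCommGroup E] [NormedSpace ℝ E]
    {u : ℕ → E} {a : E} {C : ℝ} (h : ∀ᶠ n : ℕ in atTop, ‖(n : ℝ) • (u n - a)‖ ≤ C) :
    Tendsto u atTop (𝓝 a) := by
  rw [tendsto_iff_norm_sub_tendsto_zero]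
  refine squeeze_zero' (.of_forall fun _ ↦ norm_nonneg _) ?_
    (tendsto_const_div_atTop_nhds_zero_nat C)
  filter_upwards [h, eventually_gt_atTop 0] with n hn n_pos
  rw [norm_smul, Real.norm_natCast] at hn
  rwa [le_div_iff₀' (Nat.cast_pos.mpr n_pos)]

/-- The ideal violation dynamics from time `t0` on, with the violation indicator `V*(t + 1)`
inlined. The values of `Y` before `t0` are unconstrained. -/
def IsIdealViolationDynamics (t0 : ℕ) (α : ℝ) (Y : ℕ → ℝ) : Prop :=
  ∀ t, t0 ≤ t →
    Y (t + 1) = ((t : ℝ) * Y t + (if beta t α (Y t) < 0 then 1 else 0)) / ((t : ℝ) + 1)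

/-- The number of violations up to time `t` in excess of the allowance `α * t`, when `Y` is the
time-average of violations. -/
def cumulativeExcess (α : ℝ) (Y : ℕ → ℝ) (t : ℕ) : ℝ :=
  t * (Y t - α)

theorem beta_neg_iff_cumulativeExcess_sub_lt (t : ℕ) (α : ℝ) (Y : ℕ → ℝ) :
    beta t α (Y t) < 0 ↔ cumulativeExcess α Y t - α < -(1 / 2) := by
  have t_succ_pos : (0 : ℝ) < t + 1 := by positivity
  have gap_eq : α - t * Y t / (t + 1) - 1 / (t + 1) / 2
      = (-(1 / 2) - (cumulativeExcess α Y t - α)) / (t + 1) := by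
    unfold cumulativeExcess
    field_simp
    ring
  rw [beta, sub_neg, abs_sub_lt_abs_self_iff (by positivity), ← sub_pos, gap_eq,
    div_pos_iff_of_pos_right t_succ_pos, sub_pos]

namespace IsIdealViolationDynamics

variable {t0 : ℕ} {α : ℝ} {Y : ℕ → ℝ}

theorem cumulativeExcess_succ (hY : IsIdealViolationDynamics t0 α Y) {t : ℕ} (ht : t0 ≤ t) :
    cumulativeExcess α Y (t + 1) = cumulativeExcess α Y t - α +
      if cumulativeExcess α Y t - α < -(1 / 2) then 1 else 0 := by
  simp only [← beta_neg_iff_cumulativeExcess_sub_lt]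
  rw [cumulativeExcess, cumulativeExcess, hY t ht]
  push_cast
  field_simp
  ring

theorem abs_cumulativeExcess_le (hY : IsIdealViolationDynamics t0 α Y) (hα0 : 0 ≤ α)
    (hα1 : α ≤ 1) {t : ℕ} (ht : t0 ≤ t) :
    |cumulativeExcess α Y t| ≤ max |cumulativeExcess α Y t0| (1 / 2) := by
  induction t, ht using Nat.le_induction with
  | base => exact le_max_left _ _
  | succ t ht ih =>
    rw [hY.cumulativeExcess_succ ht]
    exact (abs_sub_add_ite_le_max hα0 hα1 _).trans (max_le ih (le_max_right _ _))

end IsIdealViolationDynamics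

theorem stmt_9_general {t0 : ℕ} {α : ℝ} (hα0 : 0 ≤ α) (hα1 : α ≤ 1) {Y : ℕ → ℝ}
    (hY : IsIdealViolationDynamics t0 α Y) : Tendsto Y atTop (𝓝 α) := by
  refine tendsto_of_norm_natCast_smul_sub_le (C := max |cumulativeExcess α Y t0| (1 / 2)) ?_
  filter_upwards [eventually_ge_atTop t0] with t ht
  exact hY.abs_cumulativeExcess_le hα0 hα1 ht

theorem stmt_9 (t0 : ℕ) (ht0 : 1 ≤ t0) (α : ℝ)
    (hα0 : 1 / (2 * ((t0 : ℝ) + 1)) < α) (hα1 : α < 1 / 2)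
    (Y : ℕ → ℝ) (hY0 : 0 ≤ Y t0) (hY1 : Y t0 ≤ 1)
    (hdyn : ∀ t, t0 ≤ t →
      Y (t + 1) = ((t : ℝ) * Y t + (if beta t α (Y t) < 0 then 1 else 0)) / ((t : ℝ) + 1)) :
    Tendsto Y atTop (𝓝 α) :=
  stmt_9_general ((by positivity : (0 : ℝ) ≤ 1 / (2 * ((t0 : ℝ) + 1))).trans hα0.le)
    (by linarith) hdyn
end
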